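/- For all integers n,d ≥ 0 and k ≥ 1 we have M^{d+1}_{k−1}(x) = C_k^d(x) as formal power series; equivalently, M^{d+1}_{k−1,n} = C^d_{k,n} for all n. -/

import Mathlib

/-- Full binary trees (every internal node has exactly two children). -/
inductive BTree : Type
  | leaf : BTree
  | node : BTree → BTree → BTree
deriving DecidableEq

namespace BTree

/-- Number of leaves of a full binary tree. -/
def numLeaves : BTree → ℕ
  | leaf => 1
  | node l r => l.numLeaves + r.numLeaves

/-- The list of pairs (left depth, right depth) of the leaves, in preorder. -/
def leafDepths : BTree → List (ℕ × ℕ)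
  | leaf => [(0, 0)]
  | node l r =>
      (l.leafDepths.map fun p => (p.1 + 1, p.2)) ++ (r.leafDepths.map fun p => (p.1, p.2 + 1))

/-- The left depth sequence `ld(t)` of the leaves of `t`, in preorder. -/
def ld (t : BTree) : List ℕ := t.leafDepths.map Prod.fst

/-- The right depth sequence `rd(t)` of the leaves of `t`, in preorder. -/
def rd (t : BTree) : List ℕ := t.leafDepths.map Prod.snd

end BTree

/-- `b ~^d c` : the sequences have equal length and agree at every position where
either entry is `< d`. -/
def DepthEq (d : ℕ) : List ℕ → List ℕ → Prop :=
  List.Forall₂ (fun a b => min a b < d → a = b)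

/-- `b ~_k c` : entrywise congruence mod `k` (and equal length). -/
def ModListEq (k : ℕ) : List ℕ → List ℕ → Prop :=
  List.Forall₂ (fun a b => a % k = b % k)

/-- The relation `t ~ t'` iff `ld(t) ~^d ld(t')` and `rd(t) ~^e rd(t')`. -/
def DeRel (d e : ℕ) (t t' : BTree) : Prop :=
  DepthEq d t.ld t'.ld ∧ DepthEq e t.rd t'.rd

/-- The relation `t ~ t'` iff `ld(t) ~_k^d ld(t')` (i.e. `ld(t) ~_k ld(t')` and
`ld(t) ~^d ld(t')`). -/
def DkRel (d k : ℕ) (t t' : BTree) : Prop :=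
  ModListEq k t.ld t'.ld ∧ DepthEq d t.ld t'.ld

/-- `T_n`: full binary trees with `n+1` leaves. -/
def Tn (n : ℕ) : Type := {t : BTree // t.numLeaves = n + 1}

/-- `C^{d,e}_n`: the number of equivalence classes of the relation `DeRel d e` on `T_n`. -/
noncomputable def Cde (d e n : ℕ) : ℕ :=
  Nat.card (Quot (fun t t' : Tn n => DeRel d e t.1 t'.1))

/-- `C^d_{k,n}`: the number of equivalence classes of `ld(t) ~_k^d ld(t')` on `T_n`. -/
noncomputable def Cdk (d k n : ℕ) : ℕ :=
  Nat.card (Quot (fun t t' : Tn n => DkRel d k t.1 t'.1))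

/-- Directions to a left or right child. -/
inductive Dir : Type
  | L : Dir
  | R : Dir
deriving DecidableEq

/-- The maximal subtree rooted at the node at position `p` (if such a node exists). -/
def subtreeAt : BTree → List Dir → Option BTree
  | t, [] => some t
  | BTree.leaf, _ :: _ => none
  | BTree.node l _, Dir.L :: p => subtreeAt l p
  | BTree.node _ r, Dir.R :: p => subtreeAt r p

/-- Replace the maximal subtree rooted at position `p` by `s` (if the position exists). -/
def replaceAt : BTree → List Dir → BTree → Option BTree
  | _, [], s => some s
  | BTree.leaf, _ :: _, _ => none
  | BTree.node l r, Dir.L :: p, s => (replaceAt l p s).map fun l' => BTree.node l' r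
  | BTree.node l r, Dir.R :: p, s => (replaceAt r p s).map fun r' => BTree.node l r'

/-- `leftAssoc t₀ [t₁,…,t_m] = t₀ ∧ t₁ ∧ ⋯ ∧ t_m` with `∧` performed left to right. -/
def leftAssoc : BTree → List BTree → BTree := List.foldl BTree.node

/-- `t'` is obtained from `t` by a right `k`-rotation at the node at position `p`:
the maximal subtree `t₀ ∧ t₁ ∧ ⋯ ∧ t_{k+1}` rooted there (with `∧` performed left to
right) is replaced by `t₀ ∧ (t₁ ∧ ⋯ ∧ t_{k+1})`.  The left depth of that node is
`p.count Dir.L`. -/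
def IsRightKRot (k : ℕ) (p : List Dir) (t t' : BTree) : Prop :=
  ∃ (t₀ t₁ : BTree) (rest : List BTree), rest.length = k ∧
    subtreeAt t p = some (leftAssoc t₀ (t₁ :: rest)) ∧
    replaceAt t p (BTree.node t₀ (leftAssoc t₁ rest)) = some t'

/-- `IsTopOf s u`: `s` is a subtree of `u` rooted at the root of `u`. -/
def IsTopOf : BTree → BTree → Prop
  | BTree.leaf, _ => True
  | BTree.node l r, BTree.node l' r' => IsTopOf l l' ∧ IsTopOf r r'
  | BTree.node _ _, BTree.leaf => False

/-- `t` contains `s` at left depth `δ`: `t` has a subtree equal to `s` rooted at a node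
of left depth `δ`. -/
def ContainsAt (t s : BTree) (δ : ℕ) : Prop :=
  ∃ (p : List Dir) (u : BTree), subtreeAt t p = some u ∧ p.count Dir.L = δ ∧ IsTopOf s u

/-- `t` avoids `s` at left depth `δ`. -/
def AvoidsAt (t s : BTree) (δ : ℕ) : Prop := ¬ ContainsAt t s δ

/-- `comb_k`: the left-to-right `∧`-product of `k+1` single leaves. -/
def comb (k : ℕ) : BTree := leftAssoc BTree.leaf (List.replicate k BTree.leaf)

/-- `comb_k^1 := t₀ ∧ comb_k` with `t₀` a single leaf. -/
def comb1 (k : ℕ) : BTree := BTree.node BTree.leaf (comb k)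

/-- One left `k`-rotation step, at a node of left depth at least `d-1`, from `t` to `t'`. -/
def LeftRotStep (d k : ℕ) (t t' : BTree) : Prop :=
  ∃ p : List Dir, d - 1 ≤ p.count Dir.L ∧ IsRightKRot k p t' t

/-- The `(d;k)`-order: `s ≤ t` iff `s` is obtained from `t` by finitely many left
`k`-rotations at nodes of left depth at least `d-1`. -/
def dkLE (d k : ℕ) (s t : BTree) : Prop := Relation.ReflTransGen (LeftRotStep d k) t s

/-- `t` is `(d;k)`-minimal. -/
def dkMinimal (d k : ℕ) (t : BTree) : Prop := ∀ s, dkLE d k s t → s = t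

/-- `t` is `(d;k)`-maximal. -/
def dkMaximal (d k : ℕ) (t : BTree) : Prop := ∀ s, dkLE d k t s → s = t

/-- `M^d_{j,n}`: the number of binary trees in `T_n` avoiding `comb_{j+1}` at every left
depth at least `d-1`. -/
noncomputable def Mnum (j d n : ℕ) : ℕ :=
  Nat.card {t : BTree // t.numLeaves = n + 1 ∧ ∀ δ, d - 1 ≤ δ → AvoidsAt t (comb (j + 1)) δ}

/-- `C^d_{k,n}` with the convention `C^0_{k,n} := M^1_{k-1,n}`. -/
noncomputable def Cknum (k : ℕ) : ℕ → ℕ → ℕ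
  | 0, n => Mnum (k - 1) 1 n
  | d + 1, n => Cdk (d + 1) k n

/-- The generating function `C_k^d(x) = Σ_{n≥0} C^d_{k,n} x^{n+1}`. -/
noncomputable def CkdX (k d : ℕ) : PowerSeries ℚ :=
  PowerSeries.mk fun m => match m with
    | 0 => 0
    | n + 1 => (Cknum k d n : ℚ)

/-- The generating function `M_j^d(x) = Σ_{n≥0} M^d_{j,n} x^{n+1}`. -/
noncomputable def MkdX (j d : ℕ) : PowerSeries ℚ :=
  PowerSeries.mk fun m => match m with
    | 0 => 0
    | n + 1 => (Mnum j d n : ℚ)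

/-!
Read the left depth sequence `b = ld t` from left to right, starting from a virtual leaf of left
depth `1` (pass from `t` to `leaf ∧ t`).  Always `a ≤ b + 1` for consecutive entries `a, b`, and
the maximal left path ending at the second leaf runs through the nodes of left depths
`a - 1, …, b`; hence `t` avoids `comb_k` at all left depths `≥ d` iff every step satisfies
`b < max (a - 1) d + k`.  So an entry `≥ d` of an avoiding tree lies in a window of `k` consecutive
integers determined by its predecessor, and is known as soon as it is known modulo `k`: avoiding
trees in the same class coincide.  Conversely, lowering the entries `≥ d` of any `ld t` greedily
into their windows yields again the left depth sequence of a tree when `d ≥ 1`.  The avoiding trees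
are thus a system of representatives of the classes.
-/

theorem forall₂_and_forall₂_iff {α β : Type*} {R S : α → β → Prop} {l : List α} {m : List β} :
    List.Forall₂ R l m ∧ List.Forall₂ S l m ↔ List.Forall₂ (fun a b => R a b ∧ S a b) l m := by
  simp only [List.forall₂_iff_zip]
  grind

theorem forall₂_apply_eq_iff_map_eq {α β : Type*} {f : α → β} {l m : List α} :
    List.Forall₂ (fun a b => f a = f b) l m ↔ l.map f = m.map f := by
  rw [← List.forall₂_eq_eq_eq, List.forall₂_map_left_iff, List.forall₂_map_right_iff]

namespace BTree

/-! ### Left depth sequences -/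

/-- The left height of a tree: the number of left steps from the root to the leftmost leaf. -/
def leftHeight : BTree → ℕ
  | leaf => 0
  | node l _ => l.leftHeight + 1

theorem ld_leaf : leaf.ld = [0] := rfl

theorem ld_node (l r : BTree) : (node l r).ld = l.ld.map (· + 1) ++ r.ld := by
  simp [ld, leafDepths, Function.comp_def]

theorem length_ld (t : BTree) : t.ld.length = t.numLeaves := by
  induction t with
  | leaf => rfl
  | node l r hl hr => simp [ld_node, numLeaves, hl, hr]

theorem exists_ld_eq_leftHeight_cons (t : BTree) : ∃ L, t.ld = t.leftHeight :: L := by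
  induction t with
  | leaf => exact ⟨[], rfl⟩
  | node l r hl _ =>
    obtain ⟨L, hL⟩ := hl
    exact ⟨L.map (· + 1) ++ r.ld, by simp [ld_node, hL, leftHeight]⟩

theorem exists_ld_eq_append_zero (t : BTree) : ∃ L, t.ld = L ++ [0] := by
  induction t with
  | leaf => exact ⟨[], rfl⟩
  | node l r _ hr =>
    obtain ⟨L, hL⟩ := hr
    exact ⟨l.ld.map (· + 1) ++ L, by simp [ld_node, hL]⟩

-- The shift `e` lets the induction pass to left subtrees.
theorem eq_and_eq_of_map_ld_append_eq {s t : BTree} {e : ℕ} {A B : List ℕ}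
    (h : s.ld.map (· + e) ++ A = t.ld.map (· + e) ++ B) : s = t ∧ A = B := by
  induction s generalizing t e A B with
  | leaf =>
    cases t with
    | leaf => simpa [ld_leaf] using h
    | node l r =>
      obtain ⟨L, hL⟩ := exists_ld_eq_leftHeight_cons (node l r)
      simp [ld_leaf, hL, leftHeight] at h
  | node l r ihl ihr =>
    cases t with
    | leaf =>
      obtain ⟨L, hL⟩ := exists_ld_eq_leftHeight_cons (node l r)
      simp [ld_leaf, hL, leftHeight] at h
    | node l' r' =>
      have hsplit : l.ld.map (· + (e + 1)) ++ (r.ld.map (· + e) ++ A) =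
          l'.ld.map (· + (e + 1)) ++ (r'.ld.map (· + e) ++ B) := by
        simpa [ld_node, Function.comp_def, add_assoc, add_comm 1 e] using h
      obtain ⟨rfl, htail⟩ := ihl hsplit
      obtain ⟨rfl, rfl⟩ := ihr htail
      exact ⟨rfl, rfl⟩

theorem ld_injective : Function.Injective ld := fun _ _ h =>
  (eq_and_eq_of_map_ld_append_eq (e := 0) (congrArg (List.map (· + 0) · ++ []) h)).1

/-- The sequences `(b₀, …, bₙ)` with `bₙ = 0` and `0 < bᵢ ≤ bᵢ₊₁ + 1` for `i < n`; these are
exactly the left depth sequences of binary trees. -/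
inductive IsLeftDepthSeq : List ℕ → Prop
  | singleton : IsLeftDepthSeq [0]
  | cons {a b : ℕ} {L : List ℕ} (hab : a ≤ b) (h : IsLeftDepthSeq (b :: L)) :
      IsLeftDepthSeq ((a + 1) :: b :: L)

theorem IsLeftDepthSeq.map_succ_append {L : List ℕ} {b : ℕ} {M : List ℕ}
    (hL : IsLeftDepthSeq L) (hM : IsLeftDepthSeq (b :: M)) :
    IsLeftDepthSeq (L.map (· + 1) ++ b :: M) := by
  induction hL with
  | singleton => exact .cons (Nat.zero_le b) hM
  | cons hab _ ih => exact .cons (Nat.succ_le_succ hab) ih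

theorem isLeftDepthSeq_ld (t : BTree) : IsLeftDepthSeq t.ld := by
  induction t with
  | leaf => exact .singleton
  | node l r hl hr =>
    obtain ⟨L, hL⟩ := exists_ld_eq_leftHeight_cons r
    rw [ld_node, hL]
    exact hl.map_succ_append (hL ▸ hr)

theorem isLeftDepthSeq_one_cons_ld (t : BTree) : IsLeftDepthSeq (1 :: t.ld) := by
  simpa [ld_node, ld_leaf] using isLeftDepthSeq_ld (node leaf t)

-- Replace the subtree `u` at left depth `a` on the left spine by `leaf ∧ u`: being a right child,
-- `u` keeps its left depths.
theorem exists_ld_eq_succ_cons (t : BTree) {a : ℕ} (ha : a ≤ t.leftHeight) :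
    ∃ s : BTree, s.ld = (a + 1) :: t.ld := by
  induction t generalizing a with
  | leaf => exact ⟨node leaf leaf, by simp_all [ld_node, ld_leaf, leftHeight]⟩
  | node l r hl _ =>
    cases a with
    | zero => exact ⟨node leaf (node l r), ld_node _ _⟩
    | succ a =>
      obtain ⟨s, hs⟩ := hl (Nat.le_of_succ_le_succ ha)
      exact ⟨node s r, by simp [ld_node, hs]⟩

theorem IsLeftDepthSeq.exists_ld_eq {L : List ℕ} (hL : IsLeftDepthSeq L) :
    ∃ t : BTree, t.ld = L := by
  induction hL with
  | singleton => exact ⟨leaf, rfl⟩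
  | cons hab _ ih =>
    obtain ⟨t, ht⟩ := ih
    obtain ⟨L, hL⟩ := exists_ld_eq_leftHeight_cons t
    have hhead : t.leftHeight = _ := (List.cons.inj (hL.symm.trans ht)).1
    rw [← ht]
    exact exists_ld_eq_succ_cons t (hhead ▸ hab)

/-! ### Avoiding combs -/

theorem comb_succ (k : ℕ) : comb (k + 1) = node (comb k) leaf := by
  simp [comb, leftAssoc, List.replicate_succ']

theorem isTopOf_comb_iff {k : ℕ} {t : BTree} : IsTopOf (comb k) t ↔ k ≤ t.leftHeight := by
  induction k generalizing t with
  | zero => simp [comb, leftAssoc, IsTopOf]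
  | succ k ih => cases t <;> simp [comb_succ, IsTopOf, leftHeight, ih]

theorem containsAt_leaf_iff {s : BTree} {δ : ℕ} :
    ContainsAt leaf s δ ↔ δ = 0 ∧ IsTopOf s leaf := by
  constructor
  · rintro ⟨_ | ⟨_, _⟩, u, hu, rfl, hs⟩ <;> simp_all [subtreeAt]
  · rintro ⟨rfl, hs⟩
    exact ⟨[], leaf, rfl, rfl, hs⟩

theorem containsAt_node_iff {l r s : BTree} {δ : ℕ} :
    ContainsAt (node l r) s δ ↔ (δ = 0 ∧ IsTopOf s (node l r)) ∨
      (∃ ε, δ = ε + 1 ∧ ContainsAt l s ε) ∨ ContainsAt r s δ := by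
  constructor
  · rintro ⟨_ | ⟨_ | _, p⟩, u, hu, rfl, hs⟩
    · exact .inl ⟨rfl, Option.some.inj hu ▸ hs⟩
    · exact .inr (.inl ⟨p.count Dir.L, by simp, p, u, hu, rfl, hs⟩)
    · exact .inr (.inr ⟨p, u, hu, by simp, hs⟩)
  · rintro (⟨rfl, hs⟩ | ⟨_, rfl, p, u, hu, rfl, hs⟩ | ⟨p, u, hu, rfl, hs⟩)
    · exact ⟨[], _, rfl, rfl, hs⟩
    · exact ⟨Dir.L :: p, u, hu, by simp, hs⟩
    · exact ⟨Dir.R :: p, u, hu, by simp, hs⟩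

/-- The condition on consecutive left depths `a, b` of a tree saying that no `comb_k` is rooted
at left depth at least `d` on the maximal left path ending at the second leaf.  It is
`b < max (a - 1) d + k`, shifted by one to avoid truncated subtraction. -/
def CombFreeStep (k d a b : ℕ) : Prop := b + 1 < max a (d + 1) + k

theorem forall_avoidsAt_comb_node_iff {k d e : ℕ} {l r : BTree} :
    (∀ δ, d ≤ δ + e → AvoidsAt (node l r) (comb k) δ) ↔
      (d ≤ e → l.leftHeight + 1 < k) ∧ (∀ δ, d ≤ δ + (e + 1) → AvoidsAt l (comb k) δ) ∧
        ∀ δ, d ≤ δ + e → AvoidsAt r (comb k) δ := by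
  simp only [AvoidsAt, containsAt_node_iff, isTopOf_comb_iff, leftHeight]
  constructor
  · intro h
    refine ⟨fun hde => ?_, fun δ hδ hl => ?_, fun δ hδ hr => h δ hδ (.inr (.inr hr))⟩
    · by_contra! hk
      exact h 0 (by omega) (.inl ⟨rfl, hk⟩)
    · exact h (δ + 1) (by omega) (.inr (.inl ⟨δ, rfl, hl⟩))
  · rintro ⟨hroot, hl, hr⟩ δ hδ (⟨rfl, hk⟩ | ⟨ε, rfl, hc⟩ | hc)
    · exact absurd (hroot (by omega)) (by omega)
    · exact hl ε (by omega) hc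
    · exact hr δ hδ hc

theorem isChain_combFreeStep_node_iff {k d e : ℕ} {l r : BTree} :
    ((e + 1) :: (node l r).ld.map (· + e)).IsChain (CombFreeStep k d) ↔
      (d ≤ e → l.leftHeight + 1 < k) ∧
        ((e + 1 + 1) :: l.ld.map (· + (e + 1))).IsChain (CombFreeStep k d) ∧
          ((e + 1) :: r.ld.map (· + e)).IsChain (CombFreeStep k d) := by
  obtain ⟨A, hA⟩ := exists_ld_eq_leftHeight_cons l
  obtain ⟨B, hB⟩ := exists_ld_eq_append_zero l
  have hsplit : (e + 1) :: (node l r).ld.map (· + e) =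
      ((e + 1) :: B.map (· + (e + 1))) ++ (e + 1) :: r.ld.map (· + e) := by
    simp [ld_node, hB, Function.comp_def, add_assoc, add_comm 1 e]
  have hleft : ((e + 1) :: B.map (· + (e + 1))) ++ [e + 1] =
      (e + 1) :: (l.leftHeight + (e + 1)) :: A.map (· + (e + 1)) := by
    simpa [hA] using congrArg (fun L => (e + 1) :: L.map (· + (e + 1))) hB.symm
  have hstep : CombFreeStep k d (e + 1) (l.leftHeight + (e + 1)) ↔
      (d ≤ e → l.leftHeight + 1 < k) ∧
        CombFreeStep k d (e + 1 + 1) (l.leftHeight + (e + 1)) := by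
    unfold CombFreeStep
    omega
  rw [hsplit, List.isChain_split, hleft, hA, List.map_cons, List.isChain_cons_cons,
    List.isChain_cons_cons, hstep]
  tauto

-- Here `t` sits at left depth `e` in an ambient tree; the leaf preceding it has left depth `e + 1`.
theorem forall_avoidsAt_comb_iff_isChain {k : ℕ} (hk : 0 < k) {d e : ℕ} {t : BTree} :
    (∀ δ, d ≤ δ + e → AvoidsAt t (comb k) δ) ↔
      ((e + 1) :: t.ld.map (· + e)).IsChain (CombFreeStep k d) := by
  induction t generalizing e with
  | leaf =>
    have hstep : CombFreeStep k d (e + 1) e := by unfold CombFreeStep; omega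
    simp [AvoidsAt, containsAt_leaf_iff, isTopOf_comb_iff, leftHeight, ld_leaf, hstep, hk.ne']
  | node l r hl hr =>
    rw [forall_avoidsAt_comb_node_iff, isChain_combFreeStep_node_iff, hl, hr]

theorem forall_avoidsAt_comb_iff_isChain_ld {k : ℕ} (hk : 0 < k) {d : ℕ} {t : BTree} :
    (∀ δ, d ≤ δ → AvoidsAt t (comb k) δ) ↔ (1 :: t.ld).IsChain (CombFreeStep k d) := by
  simpa using forall_avoidsAt_comb_iff_isChain hk (d := d) (e := 0) (t := t)

/-! ### Classes of left depths -/

/-- The invariant separating the classes of left depths: two numbers have the same value iff they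
are congruent modulo `k` and, as soon as one of them is less than `d`, equal. -/
def depthClass (d k a : ℕ) : ℕ × ℕ := (a % k, min a d)

theorem depthClass_eq_iff {d k a b : ℕ} :
    depthClass d k a = depthClass d k b ↔ a % k = b % k ∧ (min a b < d → a = b) := by
  rw [depthClass, depthClass, Prod.mk_inj]
  exact and_congr_right fun _ => by omega

theorem dkRel_iff_map_depthClass_eq {d k : ℕ} {s t : BTree} :
    DkRel d k s t ↔ s.ld.map (depthClass d k) = t.ld.map (depthClass d k) := by
  rw [DkRel, ModListEq, DepthEq, forall₂_and_forall₂_iff]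
  simp only [← depthClass_eq_iff, forall₂_apply_eq_iff_map_eq]

theorem dkRel_equivalence (d k n : ℕ) :
    Equivalence fun s t : Tn n => DkRel d k s.1 t.1 := by
  simp only [dkRel_iff_map_depthClass_eq]
  exact (Setoid.ker fun t : Tn n => t.1.ld.map (depthClass d k)).iseqv

theorem numLeaves_eq_of_dkRel {d k : ℕ} {s t : BTree} (h : DkRel d k s t) :
    s.numLeaves = t.numLeaves := by
  rw [← length_ld, ← length_ld, h.1.length_eq]

/-! ### Avoiding trees represent the classes -/

theorem CombFreeStep.eq_of_depthClass_eq {k d a b c : ℕ} (hab : a ≤ b + 1) (hac : a ≤ c + 1)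
    (hb : CombFreeStep k d a b) (hc : CombFreeStep k d a c)
    (h : depthClass d k b = depthClass d k c) : b = c := by
  unfold CombFreeStep at hb hc
  obtain ⟨hmod, hsmall⟩ := depthClass_eq_iff.1 h
  by_cases hd : min b c < d
  · exact hsmall hd
  · refine Nat.ModEq.eq_of_abs_lt (m := k) hmod ?_
    rw [abs_lt]
    omega

theorem eq_of_map_depthClass_eq {k d a : ℕ} {L M : List ℕ}
    (hL : IsLeftDepthSeq (a :: L)) (hM : IsLeftDepthSeq (a :: M))
    (hL' : (a :: L).IsChain (CombFreeStep k d)) (hM' : (a :: M).IsChain (CombFreeStep k d))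
    (h : L.map (depthClass d k) = M.map (depthClass d k)) : L = M := by
  induction L generalizing a M with
  | nil => simpa [eq_comm] using h
  | cons b L ih =>
    cases M with
    | nil => simp at h
    | cons c M =>
      simp only [List.map_cons, List.cons.injEq] at h
      rw [List.isChain_cons_cons] at hL' hM'
      obtain _ | ⟨hab, hL⟩ := hL
      obtain _ | ⟨hac, hM⟩ := hM
      obtain rfl : b = c := hL'.1.eq_of_depthClass_eq (by omega) (by omega) hM'.1 h.1
      rw [ih hL hM hL'.2 hM'.2 h.2]

theorem eq_of_dkRel_of_avoidsAt_comb {k d : ℕ} (hk : 0 < k) {s t : BTree}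
    (hs : ∀ δ, d ≤ δ → AvoidsAt s (comb k) δ) (ht : ∀ δ, d ≤ δ → AvoidsAt t (comb k) δ)
    (h : DkRel d k s t) : s = t :=
  ld_injective <| eq_of_map_depthClass_eq (isLeftDepthSeq_one_cons_ld s)
    (isLeftDepthSeq_one_cons_ld t) ((forall_avoidsAt_comb_iff_isChain_ld hk).1 hs)
    ((forall_avoidsAt_comb_iff_isChain_ld hk).1 ht) (dkRel_iff_map_depthClass_eq.1 h)

theorem exists_combFreeStep_depthClass_eq {k : ℕ} (hk : 0 < k) (d : ℕ) {a b : ℕ}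
    (hab : a ≤ b + 1) :
    ∃ c ≤ b, a ≤ c + 1 ∧ CombFreeStep k d a c ∧ depthClass d k c = depthClass d k b := by
  unfold CombFreeStep
  rcases lt_or_ge b d with hbd | hdb
  · exact ⟨b, le_rfl, hab, by omega, rfl⟩
  · obtain ⟨x, rfl⟩ : ∃ x, b = max (a - 1) d + x := Nat.exists_eq_add_of_le (by omega)
    have hlt : x % k < k := Nat.mod_lt x hk
    have hle : x % k ≤ x := Nat.mod_le x k
    exact ⟨max (a - 1) d + x % k, by omega, by omega, by omega,
      depthClass_eq_iff.2 ⟨Nat.add_mod_mod _ _ _, by omega⟩⟩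

theorem IsLeftDepthSeq.exists_isChain_combFreeStep {k d : ℕ} (hk : 0 < k) (hd : 0 < d)
    {b c : ℕ} {L : List ℕ} (hL : IsLeftDepthSeq (b :: L)) (hcb : c ≤ b)
    (h : depthClass d k c = depthClass d k b) :
    ∃ M, IsLeftDepthSeq (c :: M) ∧ (c :: M).IsChain (CombFreeStep k d) ∧
      M.map (depthClass d k) = L.map (depthClass d k) := by
  induction L generalizing b c with
  | nil =>
    cases hL
    obtain rfl : c = 0 := Nat.le_zero.1 hcb
    exact ⟨[], .singleton, .singleton 0, rfl⟩
  | cons b' L ih =>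
    obtain _ | ⟨hbb', hL'⟩ := hL
    obtain ⟨c', hcb', hcc', hstep, hclass⟩ :=
      exists_combFreeStep_depthClass_eq hk d (a := c) (b := b') (by omega)
    obtain ⟨M, hM, hchain, hmap⟩ := ih hL' hcb' hclass
    have hc : 1 ≤ c := by
      have := (depthClass_eq_iff.1 h).2
      omega
    obtain ⟨a, rfl⟩ := Nat.exists_eq_add_of_le' hc
    exact ⟨c' :: M, .cons (Nat.le_of_succ_le_succ hcc') hM, .cons_cons hstep hchain,
      by simp [hclass, hmap]⟩

theorem exists_dkRel_avoidsAt_comb {k d : ℕ} (hk : 0 < k) (hd : 0 < d) (t : BTree) :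
    ∃ s, DkRel d k s t ∧ ∀ δ, d ≤ δ → AvoidsAt s (comb k) δ := by
  obtain ⟨M, hM, hchain, hmap⟩ :=
    (isLeftDepthSeq_one_cons_ld t).exists_isChain_combFreeStep hk hd le_rfl rfl
  obtain _ | ⟨_, hM⟩ := hM
  obtain ⟨s, hs⟩ := hM.exists_ld_eq
  exact ⟨s, dkRel_iff_map_depthClass_eq.2 (hs ▸ hmap),
    (forall_avoidsAt_comb_iff_isChain_ld hk).2 (hs ▸ hchain)⟩

theorem mnum_eq_cdk (j : ℕ) {d : ℕ} (hd : 0 < d) (n : ℕ) :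
    Mnum j (d + 1) n = Cdk d (j + 1) n := by
  refine Nat.card_eq_of_bijective (fun t => Quot.mk _ (⟨t.1, t.2.1⟩ : Tn n)) ⟨?_, ?_⟩
  · rintro ⟨s, hsn, hs⟩ ⟨t, htn, ht⟩ hst
    have hrel := ((dkRel_equivalence d (j + 1) n).quot_mk_eq_iff _ _).1 hst
    exact Subtype.ext (eq_of_dkRel_of_avoidsAt_comb j.succ_pos hs ht hrel)
  · rintro ⟨t, ht⟩
    obtain ⟨s, hst, hs⟩ := exists_dkRel_avoidsAt_comb j.succ_pos hd t
    exact ⟨⟨s, (numLeaves_eq_of_dkRel hst).trans ht, hs⟩, Quot.sound hst⟩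

end BTree

/-- for `k ≥ 1` and `d,n ≥ 0`, `M^{d+1}_{k-1}(x) = C_k^d(x)`;
equivalently `M^{d+1}_{k-1,n} = C^d_{k,n}` for all `n`. -/
theorem stmt15 (k d : ℕ) (hk : 1 ≤ k) :
    MkdX (k - 1) (d + 1) = CkdX k d ∧ ∀ n : ℕ, Mnum (k - 1) (d + 1) n = Cknum k d n := by
  obtain ⟨j, rfl⟩ := Nat.exists_eq_add_of_le' hk
  have hcoeff : ∀ n, Mnum j (d + 1) n = Cknum (j + 1) d n := fun n =>
    match d with
    | 0 => rfl
    | d + 1 => BTree.mnum_eq_cdk j d.succ_pos n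
  refine ⟨PowerSeries.ext fun m => ?_, hcoeff⟩
  cases m with
  | zero => simp [MkdX, CkdX]
  | succ n => simp [MkdX, CkdX, hcoeff]
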